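/- Let X_1,…,X_n ∈ ℝ with X_i ≠ 0 for all i, and let Ĝ be any maximizer of G ↦ ∑_{i=1}^n log f_{0,G}(X_i) over all probability measures G on (0,∞) (the nonparametric MLE). Then Ĝ exists, is unique, is a discrete measure whose number of atoms is at most the cardinality of {|X_1|,…,|X_n|}, and its support is contained in [min_{i∈[n]} |X_i|, max_{i∈[n]} |X_i|]. -/

import Mathlib

open MeasureTheory ProbabilityTheory
open scoped ENNReal NNReal

/-- The standard normal density `φ`. -/
noncomputable def stdNormalPDF (u : ℝ) : ℝ :=
  Real.exp (-u ^ 2 / 2) / Real.sqrt (2 * Real.pi)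

/-- The normal scale mixture density `f_{μ,G}`. -/
noncomputable def mixDensity (μ : ℝ) (G : Measure ℝ) (x : ℝ) : ℝ :=
  ∫ σ, (1 / σ) * stdNormalPDF ((x - μ) / σ) ∂G

/-- The squared Hellinger distance between two densities on `ℝ`. -/
noncomputable def hellingerSq (p q : ℝ → ℝ) : ℝ :=
  ∫ x, (Real.sqrt (p x) - Real.sqrt (q x)) ^ 2

/-- The Hellinger modulus of continuity `ω_{H²,G}(t)` of the location family generated
by `G`, valued in `ℝ≥0∞`. -/
noncomputable def modulusEnn (G : Measure ℝ) (t : ℝ) : ℝ≥0∞ :=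
  ⨆ (μ₁ : ℝ) (μ₂ : ℝ) (_ : hellingerSq (mixDensity μ₁ G) (mixDensity μ₂ G) ≤ t),
    ENNReal.ofReal |μ₁ - μ₂|

/-- `G` is a probability measure supported in `[σmin, σmax]`. -/
def IsPriorOn (σmin σmax : ℝ) (G : Measure ℝ) : Prop :=
  IsProbabilityMeasure G ∧ G (Set.Icc σmin σmax)ᶜ = 0

/-- The mixture log-likelihood of the data `X` at parameters `(μ, G)`. -/
noncomputable def logLik {n : ℕ} (X : Fin n → ℝ) (μ : ℝ) (G : Measure ℝ) : ℝ :=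
  ∑ i, Real.log (mixDensity μ G (X i))

/-- `(μh, Gh)` is a joint maximizer of the mixture likelihood over `μ ∈ ℝ` and
probability measures `G` supported in `[σmin, σmax]`; `μh` is then the
empirical Bayes profile MLE. -/
def IsProfileMLE {n : ℕ} (σmin σmax : ℝ) (X : Fin n → ℝ) (μh : ℝ) (Gh : Measure ℝ) : Prop :=
  IsPriorOn σmin σmax Gh ∧
    ∀ (μ' : ℝ) (G : Measure ℝ), IsPriorOn σmin σmax G → logLik X μ' G ≤ logLik X μh Gh

/-- The empirical distribution `G_n = (1/n) ∑ δ_{σ i}`. -/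
noncomputable def empMeasure {n : ℕ} (σ : Fin n → ℝ) : Measure ℝ :=
  (n : ℝ≥0∞)⁻¹ • ∑ i, Measure.dirac (σ i)

/-- `G` is a nonparametric maximum likelihood estimator (NPMLE): a probability measure
on `(0, ∞)` maximizing the centered mixture log-likelihood of the data `X`. -/
def IsNPMLE {n : ℕ} (X : Fin n → ℝ) (G : Measure ℝ) : Prop :=
  IsProbabilityMeasure G ∧ G (Set.Ioi 0)ᶜ = 0 ∧
    ∀ G' : Measure ℝ, IsProbabilityMeasure G' → G' (Set.Ioi 0)ᶜ = 0 →
      logLik X 0 G' ≤ logLik X 0 G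

/-! The log-likelihood depends on `G` only through the vector of fitted densities `f_{0,G}(X_i)`,
which ranges over a convex set, compact once `G` is confined to a compact interval, and `∑ i, log`
is strictly concave there. Hence `G` is optimal iff Lindsay's gradient function
`D σ = ∑ i, σ⁻¹ φ(X_i / σ) / f_{0,G}(X_i)` is at most `n` on `(0, ∞)`, in which case `G` is carried
by the contact set `{D = n}`. Each summand of `D` increases up to `|X_i|` and decreases beyond it,
so the contact set lies in `[min |X_i|, max |X_i|]`.

Contact points are maxima of `D`, so by Rolle `k` of them force `2 k - 1` zeros of `D'`. In the
variable `σ⁻²`, `D'` is up to a positive factor an exponential polynomial with affine coefficients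
and `m = #{|X_1|, …, |X_n|}` distinct frequencies; it has at most `2 m - 1` zeros, so `k ≤ m`.
Strict concavity makes the fitted vector unique, and with it the contact set. A linear combination
of the `k` kernels at the contact points that vanishes at all `X_i` is an exponential polynomial in
`x²` with constant coefficients and `m ≥ k` zeros, hence trivial: the weights are unique as well.
-/

open Set

section Rolle

open scoped Finset

variable {I : Set ℝ} {f f' : ℝ → ℝ} {c : ℝ} {Z : Finset ℝ}

lemma exists_disjoint_deriv_zeros_of_eq_const [I.OrdConnected]
    (hf : ∀ x ∈ I, HasDerivAt f (f' x) x) (hZI : ∀ z ∈ Z, z ∈ I) (hZ : ∀ z ∈ Z, f z = c) :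
    ∃ W : Finset ℝ, (∀ w ∈ W, w ∈ I ∧ f' w = 0) ∧ Disjoint Z W ∧ #Z ≤ #W + 1 := by
  have rolle : ∀ x ∈ Z, ∀ y ∈ Z, x < y → ∃ w ∈ Ioo x y, w ∈ I ∧ f' w = 0 := by
    intro x hx y hy hxy
    have hIcc : Icc x y ⊆ I := OrdConnected.out ‹_› (hZI x hx) (hZI y hy)
    obtain ⟨w, hw, hw0⟩ := exists_hasDerivAt_eq_zero hxy
      (fun t ht => (hf t (hIcc ht)).continuousAt.continuousWithinAt)
      ((hZ x hx).trans (hZ y hy).symm)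
      (fun t ht => hf t (hIcc (Ioo_subset_Icc_self ht)))
    exact ⟨w, hw, hIcc (Ioo_subset_Icc_self hw), hw0⟩
  choose! w hwIoo hw using rolle
  let W : Finset ℝ := {p ∈ Z ×ˢ Z | p.1 < p.2}.image fun p => w p.1 p.2
  have mem_W {x y} (hx : x ∈ Z) (hy : y ∈ Z) (hxy : x < y) : w x y ∈ W :=
    Finset.mem_image.2 ⟨(x, y), by simp [hx, hy, hxy], rfl⟩
  refine ⟨W \ Z, ?_, Finset.disjoint_sdiff, Finset.card_le_sdiff_of_interleaved ?_⟩
  · simp only [W, Finset.mem_sdiff, Finset.mem_image, Finset.mem_filter, Finset.mem_product]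
    rintro _ ⟨⟨p, ⟨⟨hp₁, hp₂⟩, hp⟩, rfl⟩, -⟩
    exact hw _ hp₁ _ hp₂ hp
  · exact fun x hx y hy hxy _ => ⟨w x y, mem_W hx hy hxy, hwIoo x hx y hy hxy⟩

lemma exists_deriv_zeros_of_eq_max [I.OrdConnected] (hI : IsOpen I)
    (hf : ∀ x ∈ I, HasDerivAt f (f' x) x) (hc : ∀ x ∈ I, f x ≤ c) (hZI : ∀ z ∈ Z, z ∈ I)
    (hZ : ∀ z ∈ Z, f z = c) :
    ∃ W : Finset ℝ, (∀ w ∈ W, w ∈ I ∧ f' w = 0) ∧ 2 * #Z ≤ #W + 1 := by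
  obtain ⟨W, hW, hZW, hcard⟩ := exists_disjoint_deriv_zeros_of_eq_const hf hZI hZ
  have hZ' : ∀ z ∈ Z, f' z = 0 := fun z hz => by
    have hmax : IsLocalMax f z := by
      filter_upwards [hI.mem_nhds (hZI z hz)] with x hx
      exact (hc x hx).trans_eq (hZ z hz).symm
    exact hmax.hasDerivAt_eq_zero (hf z (hZI z hz))
  refine ⟨Z ∪ W, fun w hw => ?_, ?_⟩
  · exact (Finset.mem_union.1 hw).elim (fun h => ⟨hZI w h, hZ' w h⟩) (hW w)
  · rw [Finset.card_union_of_disjoint hZW]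
    omega

end Rolle

section ExpPoly

open Polynomial
open scoped Finset

variable {ι κ : Type*}

/-- The exponential polynomial `∑ i ∈ s, P i (x) exp (e i * x)` with frequencies `e` and polynomial
coefficients `P`. -/
noncomputable def expPoly (s : Finset ι) (e : ι → ℝ) (P : ι → ℝ[X]) (x : ℝ) : ℝ :=
  ∑ i ∈ s, (P i).eval x * Real.exp (e i * x)

lemma hasDerivAt_expPoly (s : Finset ι) (e : ι → ℝ) (P : ι → ℝ[X]) (x : ℝ) :
    HasDerivAt (expPoly s e P) (expPoly s e (fun i => derivative (P i) + e i • P i) x) x := by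
  refine HasDerivAt.fun_sum fun i _ => ?_
  have hexp : HasDerivAt (fun x => Real.exp (e i * x)) (Real.exp (e i * x) * e i) x := by
    simpa using ((hasDerivAt_id x).const_mul (e i)).exp
  refine (((P i).hasDerivAt x).mul hexp).congr_deriv ?_
  simp only [eval_add, eval_smul, smul_eq_mul]
  ring

lemma exp_mul_expPoly (s : Finset ι) (e : ι → ℝ) (P : ι → ℝ[X]) (b x : ℝ) :
    Real.exp (b * x) * expPoly s e P x = expPoly s (fun i => e i + b) P x := by
  simp only [expPoly, Finset.mul_sum, add_mul, Real.exp_add]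
  exact Finset.sum_congr rfl fun i _ => by ring

lemma expPoly_image [DecidableEq κ] (s : Finset ι) (g : ι → κ) (e : κ → ℝ) (P : ι → ℝ[X]) :
    expPoly (s.image g) e (fun r => ∑ i ∈ s with g i = r, P i) = expPoly s (e ∘ g) P := by
  ext x
  simp only [expPoly, eval_finsetSum, Finset.sum_mul, Function.comp_apply]
  rw [← Finset.sum_fiberwise_of_maps_to fun i hi => Finset.mem_image_of_mem g hi]
  refine Finset.sum_congr rfl fun r _ => Finset.sum_congr rfl fun i hi => ?_
  rw [(Finset.mem_filter.1 hi).2]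

lemma eq_zero_of_derivative_add_smul_eq_zero {R : Type*} [CommRing R] [IsDomain R] {P : R[X]}
    {a : R} (ha : a ≠ 0) (h : derivative P + a • P = 0) : P = 0 := by
  by_contra hP
  have hdeg : (a • P).degree = P.degree := by rw [smul_eq_C_mul, degree_C_mul ha]
  have hlt : (derivative P).degree < (a • P).degree := hdeg ▸ degree_derivative_lt hP
  have hbot := degree_add_eq_right_of_degree_lt hlt
  rw [h, hdeg, degree_zero] at hbot
  exact hP (degree_eq_bot.1 hbot.symm)

lemma degree_derivative_lt_of_degree_lt_succ {R : Type*} [Semiring R] {P : R[X]} {n : ℕ}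
    (h : P.degree < (n + 1 : ℕ)) : (derivative P).degree < n := by
  rw [degree_lt_iff_coeff_zero] at h ⊢
  intro m hm
  rw [coeff_derivative, h (m + 1) (by omega), zero_mul]

lemma eq_zero_of_derivative_eq_zero_of_expPoly_eq_zero {s : Finset ι} {e : ι → ℝ} {P : ι → ℝ[X]}
    {b : ι} {z : ℝ} (hb : b ∈ s) (hPb : derivative (P b) = 0)
    (hP : ∀ i ∈ s, i ≠ b → P i = 0) (hz : expPoly s e P z = 0) : P b = 0 := by
  rw [expPoly, Finset.sum_eq_single_of_mem b hb fun i hi hib => by simp [hP i hi hib],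
    eq_C_of_derivative_eq_zero hPb, eval_C] at hz
  rw [eq_C_of_derivative_eq_zero hPb, (mul_eq_zero.1 hz).resolve_right (Real.exp_ne_zero _), C_0]

/- Multiplying by `exp (-e b * x)` and differentiating costs at most one zero by Rolle; it
lowers the degree of the coefficient `P b` and raises no other degree. -/
theorem coeff_eq_zero_of_expPoly_eq_zero {s : Finset ι} {e : ι → ℝ} (he : InjOn e s)
    {P : ι → ℝ[X]} {d : ι → ℕ} (hP : ∀ i ∈ s, (P i).degree < d i) {Z : Finset ℝ}
    (hcard : ∑ i ∈ s, d i ≤ #Z) (hZ : ∀ z ∈ Z, expPoly s e P z = 0) : ∀ i ∈ s, P i = 0 := by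
  classical
  induction hN : ∑ i ∈ s, d i generalizing e P d Z with
  | zero =>
    intro i hi
    simpa [Finset.sum_eq_zero_iff.1 hN i hi] using hP i hi
  | succ N ih =>
    by_contra! ⟨b, hbs, hPb⟩
    set e' : ι → ℝ := fun i => e i + -e b
    set P' : ι → ℝ[X] := fun i => derivative (P i) + e' i • P i
    have he'b : e' b = 0 := add_neg_cancel _
    obtain ⟨k, hk⟩ : ∃ k, d b = k + 1 :=
      Nat.exists_eq_succ_of_ne_zero fun h => hPb (by simpa [h] using hP b hbs)
    obtain ⟨W, hW, -, hZW⟩ := exists_disjoint_deriv_zeros_of_eq_const (I := univ) (c := 0) (Z := Z)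
      (fun x _ => hasDerivAt_expPoly s e' P x) (fun _ _ => mem_univ _)
      (fun z hz => by rw [← exp_mul_expPoly, hZ z hz, mul_zero])
    have hsum : ∑ i ∈ s, Function.update d b k i = N := by
      have := Finset.add_sum_erase s d hbs
      rw [Finset.sum_update_of_mem hbs, Finset.sdiff_singleton_eq_erase]
      omega
    have hdeg : ∀ i ∈ s, (P' i).degree < Function.update d b k i := by
      intro i hi
      obtain rfl | hib := eq_or_ne i b
      · simpa [P', he'b] using degree_derivative_lt_of_degree_lt_succ (hk ▸ hP i hi)
      · rw [Function.update_of_ne hib]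
        exact (degree_add_le _ _).trans_lt <| max_lt (degree_derivative_le.trans_lt (hP i hi))
          ((degree_smul_le _ _).trans_lt (hP i hi))
    have hP' : ∀ i ∈ s, P' i = 0 :=
      ih (fun i hi j hj hij => he hi hj (add_right_cancel hij)) hdeg (by omega)
        (fun w hw => (hW w hw).2) hsum
    have hP_ne : ∀ i ∈ s, i ≠ b → P i = 0 := fun i hi hib =>
      eq_zero_of_derivative_add_smul_eq_zero
        (fun h => hib (he hi hbs (add_neg_eq_zero.1 h))) (hP' i hi)
    obtain ⟨z, hz⟩ : Z.Nonempty := Finset.card_pos.1 (by omega)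
    exact hPb <| eq_zero_of_derivative_eq_zero_of_expPoly_eq_zero hbs
      (by simpa [P', he'b] using hP' b hbs) hP_ne (hZ z hz)

end ExpPoly

section SumLog

variable {ι : Type*} [Fintype ι] {u v : ι → ℝ}

lemma sum_div_le_card_of_isMaxOn_sum_log {M : Set (ι → ℝ)} (hM : Convex ℝ M) (huM : u ∈ M)
    (hu : ∀ i, 0 < u i) (hmax : IsMaxOn (fun w => ∑ i, Real.log (w i)) M u) (hv : v ∈ M) :
    ∑ i, v i / u i ≤ Fintype.card ι := by
  have hderiv : HasFDerivAt (fun w : ι → ℝ => ∑ i, Real.log (w i))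
      (∑ i, (u i)⁻¹ • ContinuousLinearMap.proj (R := ℝ) (φ := fun _ : ι => ℝ) i) u :=
    HasFDerivAt.fun_sum fun i _ => (hasFDerivAt_apply i u).log (hu i).ne'
  have hle : ∑ i, (u i)⁻¹ * (v i - u i) ≤ 0 := by
    simpa using hmax.localize.hasFDerivWithinAt_nonpos hderiv.hasFDerivWithinAt
      (sub_mem_posTangentConeAt_of_segment_subset (hM.segment_subset huM hv))
  have hterm : ∀ i, (u i)⁻¹ * (v i - u i) = v i / u i - 1 := fun i => by
    have := (hu i).ne'
    field_simp
  simpa [hterm] using hle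

lemma sum_log_le_of_sum_div_le_card (hu : ∀ i, 0 < u i) (hv : ∀ i, 0 < v i)
    (h : ∑ i, v i / u i ≤ Fintype.card ι) : ∑ i, Real.log (v i) ≤ ∑ i, Real.log (u i) := by
  have hlog : ∀ i, Real.log (v i) - Real.log (u i) ≤ v i / u i - 1 := fun i => by
    rw [← Real.log_div (hv i).ne' (hu i).ne']
    exact Real.log_le_sub_one_of_pos (div_pos (hv i) (hu i))
  have := Finset.sum_le_sum fun i (_ : i ∈ Finset.univ) => hlog i
  simp only [Finset.sum_sub_distrib, Finset.sum_const, Finset.card_univ, nsmul_eq_mul,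
    mul_one] at this
  linarith

lemma eq_of_sum_div_le_card (hu : ∀ i, 0 < u i) (hv : ∀ i, 0 < v i)
    (huv : ∑ i, v i / u i ≤ Fintype.card ι) (hvu : ∑ i, u i / v i ≤ Fintype.card ι) : u = v := by
  have hterm : ∀ i, (u i - v i) ^ 2 / (u i * v i) = (v i / u i - 1) + (u i / v i - 1) := fun i => by
    have := (hu i).ne'
    have := (hv i).ne'
    field_simp
    ring
  have hnonneg : ∀ i ∈ Finset.univ, 0 ≤ (u i - v i) ^ 2 / (u i * v i) := fun i _ =>
    div_nonneg (sq_nonneg _) (mul_pos (hu i) (hv i)).le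
  have hsum : ∑ i, (u i - v i) ^ 2 / (u i * v i) = 0 := by
    refine le_antisymm ?_ (Finset.sum_nonneg hnonneg)
    simp only [hterm, Finset.sum_add_distrib, Finset.sum_sub_distrib, Finset.sum_const,
      Finset.card_univ, nsmul_eq_mul, mul_one]
    linarith
  ext i
  have hi := (Finset.sum_eq_zero_iff_of_nonneg hnonneg).1 hsum i (Finset.mem_univ i)
  simpa [(hu i).ne', (hv i).ne', sub_eq_zero] using hi

end SumLog

section ProbMeasuresOn

variable {α ι : Type*} [MeasurableSpace α]

/-- The probability measures on `α` that are carried by `A`, as a set of competitors for an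
optimization over mixing distributions. -/
def probMeasuresOn (A : Set α) : Set (Measure α) :=
  {G | IsProbabilityMeasure G ∧ G Aᶜ = 0}

lemma probMeasuresOn_mono {A B : Set α} (h : A ⊆ B) : probMeasuresOn A ⊆ probMeasuresOn B :=
  fun _ hG => ⟨hG.1, measure_mono_null (compl_subset_compl.2 h) hG.2⟩

lemma dirac_mem_probMeasuresOn [MeasurableSingletonClass α] {A : Set α} {a : α} (ha : a ∈ A) :
    Measure.dirac a ∈ probMeasuresOn A :=
  ⟨inferInstance, by simp [ha]⟩

lemma ae_mem_of_mem_probMeasuresOn {A : Set α} {G : Measure α} (hG : G ∈ probMeasuresOn A) :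
    ∀ᵐ a ∂G, a ∈ A :=
  hG.2

lemma convex_image_integral_probMeasuresOn {A : Set α} {k : ι → α → ℝ}
    (hk : ∀ i, ∀ G ∈ probMeasuresOn A, Integrable (k i) G) :
    Convex ℝ ((fun G i => ∫ a, k i a ∂G) '' probMeasuresOn A) := by
  rintro _ ⟨G, hG, rfl⟩ _ ⟨H, hH, rfl⟩ p q hp hq hpq
  lift p to ℝ≥0 using hp
  lift q to ℝ≥0 using hq
  have := hG.1
  have := hH.1
  refine ⟨p • G + q • H, ⟨⟨?_⟩, by simp [hG.2, hH.2]⟩, funext fun i => ?_⟩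
  · rw [Measure.add_apply, Measure.smul_apply, Measure.smul_apply, measure_univ, measure_univ,
      ENNReal.smul_def, ENNReal.smul_def, smul_eq_mul, smul_eq_mul, mul_one, mul_one]
    exact_mod_cast hpq
  · simp only [Pi.add_apply, Pi.smul_apply]
    rw [integral_add_measure ((hk i G hG).smul_measure_nnreal)
      ((hk i H hH).smul_measure_nnreal), integral_smul_nnreal_measure, integral_smul_nnreal_measure]
    rfl

lemma isCompact_image_integral_probMeasuresOn [TopologicalSpace α] [T2Space α] [BorelSpace α]
    {K : Set α} (hK : IsCompact K) {k : ι → α → ℝ} (hk : ∀ i, ContinuousOn (k i) K) :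
    IsCompact ((fun G i => ∫ a, k i a ∂G) '' probMeasuresOn K) := by
  have : CompactSpace K := isCompact_iff_compactSpace.1 hK
  have hKm : MeasurableSet K := hK.isClosed.measurableSet
  let F : ProbabilityMeasure K → ι → ℝ := fun μ i => ∫ a : K, k i a ∂(μ : Measure K)
  have hF : Continuous F := continuous_pi fun i =>
    ProbabilityMeasure.continuous_integral_continuousMap
      (⟨fun a : K => k i a, (hk i).domRestrict⟩ : C(K, ℝ))
  convert isCompact_range hF using 1
  ext u
  constructor
  · rintro ⟨G, hG, rfl⟩
    have := hG.1
    have hprob : IsProbabilityMeasure (G.comap ((↑) : K → α)) := ⟨by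
      rw [comap_subtype_coe_apply hKm, image_univ, Subtype.range_coe]
      exact (prob_compl_eq_zero_iff hKm).1 hG.2⟩
    refine ⟨⟨_, hprob⟩, funext fun i => ?_⟩
    exact (integral_subtype_comap hKm (k i)).trans <| by
      rw [Measure.restrict_eq_self_of_ae_mem (ae_mem_of_mem_probMeasuresOn hG)]
  · rintro ⟨μ, rfl⟩
    refine ⟨(μ : Measure K).map (↑), ⟨Measure.isProbabilityMeasure_map
      measurable_subtype_coe.aemeasurable, ?_⟩, funext fun i => ?_⟩
    · rw [Measure.map_apply measurable_subtype_coe hKm.compl]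
      simp
    · exact (MeasurableEmbedding.subtype_coe hKm).integral_map (k i)

lemma measure_eq_of_forall_singleton_eq [MeasurableSingletonClass α] {G H : Measure α}
    {S : Finset α} (hG : ∀ᵐ a ∂G, a ∈ (S : Set α)) (hH : ∀ᵐ a ∂H, a ∈ (S : Set α))
    (h : ∀ a ∈ S, G {a} = H {a}) : G = H := by
  rw [← Measure.restrict_eq_self_of_ae_mem hG, ← Measure.restrict_eq_self_of_ae_mem hH,
    ← biUnion_of_singleton (S : Set α)]
  exact Measure.restrict_biUnion_finset_congr.2 fun a ha => by
    rw [Measure.restrict_singleton, Measure.restrict_singleton, h a ha]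

end ProbMeasuresOn

section ScaleKernel

/-- The centered normal density at `x` with standard deviation `σ`, i.e. the kernel of the scale
mixtures `mixDensity 0 G x`. -/
noncomputable def scaleKernel (x σ : ℝ) : ℝ :=
  1 / σ * stdNormalPDF (x / σ)

lemma stdNormalPDF_pos (u : ℝ) : 0 < stdNormalPDF u := by
  unfold stdNormalPDF
  positivity

lemma hasDerivAt_stdNormalPDF (u : ℝ) : HasDerivAt stdNormalPDF (-u * stdNormalPDF u) u := by
  have hexp := ((((hasDerivAt_id u).pow 2).fun_neg.div_const 2).exp).div_const √(2 * Real.pi)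
  refine hexp.congr_deriv ?_
  simp only [stdNormalPDF, id, Pi.pow_apply]
  ring

lemma mixDensity_zero_left (G : Measure ℝ) (x : ℝ) :
    mixDensity 0 G x = ∫ σ, scaleKernel x σ ∂G := by
  simp only [mixDensity, scaleKernel, sub_zero]

lemma scaleKernel_pos (x : ℝ) {σ : ℝ} (hσ : 0 < σ) : 0 < scaleKernel x σ :=
  mul_pos (one_div_pos.2 hσ) (stdNormalPDF_pos _)

lemma measurable_scaleKernel (x : ℝ) : Measurable (scaleKernel x) := by
  unfold scaleKernel stdNormalPDF
  fun_prop

lemma hasDerivAt_scaleKernel (x : ℝ) {σ : ℝ} (hσ : σ ≠ 0) :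
    HasDerivAt (scaleKernel x) ((x ^ 2 - σ ^ 2) / σ ^ 4 * stdNormalPDF (x / σ)) σ := by
  have hinv := (hasDerivAt_const σ (1 : ℝ)).fun_div (hasDerivAt_id σ) hσ
  have hdiv := (hasDerivAt_const σ x).fun_div (hasDerivAt_id σ) hσ
  refine (hinv.fun_mul ((hasDerivAt_stdNormalPDF (x / σ)).comp σ hdiv)).congr_deriv ?_
  simp only [id, Function.comp_apply]
  field_simp
  ring

lemma continuousOn_scaleKernel (x : ℝ) : ContinuousOn (scaleKernel x) (Ioi 0) :=
  fun _ hσ => (hasDerivAt_scaleKernel x (ne_of_gt hσ)).continuousAt.continuousWithinAt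

lemma strictMonoOn_scaleKernel (x : ℝ) : StrictMonoOn (scaleKernel x) (Ioc 0 |x|) := by
  refine strictMonoOn_of_deriv_pos (convex_Ioc _ _)
    ((continuousOn_scaleKernel x).mono Ioc_subset_Ioi_self) fun σ hσ => ?_
  rw [interior_Ioc] at hσ
  have hlt : σ ^ 2 < x ^ 2 := sq_lt_sq.2 (by rw [abs_of_pos hσ.1]; exact hσ.2)
  rw [(hasDerivAt_scaleKernel x hσ.1.ne').deriv]
  exact mul_pos (div_pos (sub_pos.2 hlt) (pow_pos hσ.1 4)) (stdNormalPDF_pos _)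

lemma strictAntiOn_scaleKernel {x : ℝ} (hx : x ≠ 0) : StrictAntiOn (scaleKernel x) (Ici |x|) := by
  have hx' : 0 < |x| := abs_pos.2 hx
  refine strictAntiOn_of_deriv_neg (convex_Ici _)
    ((continuousOn_scaleKernel x).mono fun σ hσ => hx'.trans_le hσ) fun σ hσ => ?_
  rw [interior_Ici] at hσ
  have hσ0 : 0 < σ := hx'.trans hσ
  have hlt : x ^ 2 < σ ^ 2 := sq_lt_sq.2 (by rwa [abs_of_pos hσ0])
  rw [(hasDerivAt_scaleKernel x hσ0.ne').deriv]
  exact mul_neg_of_neg_of_pos (div_neg_of_neg_of_pos (sub_neg.2 hlt) (pow_pos hσ0 4))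
    (stdNormalPDF_pos _)

lemma scaleKernel_le_scaleKernel_abs {x σ : ℝ} (hx : x ≠ 0) (hσ : 0 < σ) :
    scaleKernel x σ ≤ scaleKernel x |x| := by
  obtain h | h := le_total σ |x|
  · exact (strictMonoOn_scaleKernel x).monotoneOn ⟨hσ, h⟩ ⟨abs_pos.2 hx, le_rfl⟩ h
  · exact (strictAntiOn_scaleKernel hx).antitoneOn self_mem_Ici h h

lemma integrable_scaleKernel {x : ℝ} (hx : x ≠ 0) {G : Measure ℝ} [IsFiniteMeasure G]
    (hG : ∀ᵐ σ ∂G, 0 < σ) : Integrable (scaleKernel x) G := by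
  refine .of_bound (measurable_scaleKernel x).aestronglyMeasurable (scaleKernel x |x|) ?_
  filter_upwards [hG] with σ hσ
  rw [Real.norm_of_nonneg (scaleKernel_pos x hσ).le]
  exact scaleKernel_le_scaleKernel_abs hx hσ

lemma mixDensity_pos {x : ℝ} (hx : x ≠ 0) {G : Measure ℝ} (hG : G ∈ probMeasuresOn (Ioi 0)) :
    0 < mixDensity 0 G x := by
  have := hG.1
  have hpos : ∀ᵐ σ ∂G, 0 < σ := hG.2
  rw [mixDensity_zero_left]
  have hnonneg : 0 ≤ᵐ[G] scaleKernel x := hpos.mono fun σ hσ => (scaleKernel_pos x hσ).le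
  refine (integral_nonneg_of_ae hnonneg).lt_of_ne' fun h => ?_
  have hzero := (integral_eq_zero_iff_of_nonneg_ae hnonneg (integrable_scaleKernel hx hpos)).1 h
  obtain ⟨σ, hσ, hσ0⟩ := (hpos.and hzero).exists
  exact (scaleKernel_pos x hσ).ne' hσ0

end ScaleKernel

section FittedValues

variable {ι : Type*}

/-- The vector of mixture densities of `G` at the data points `X`. The log-likelihood depends on
the mixing measure only through it. -/
noncomputable def fittedValues (X : ι → ℝ) (G : Measure ℝ) : ι → ℝ :=
  fun i => mixDensity 0 G (X i)

variable {X : ι → ℝ} {A : Set ℝ} {G : Measure ℝ}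

lemma fittedValues_eq_integral (X : ι → ℝ) :
    fittedValues X = fun G i => ∫ σ, scaleKernel (X i) σ ∂G :=
  funext fun G => funext fun i => mixDensity_zero_left G (X i)

lemma fittedValues_pos (hX : ∀ i, X i ≠ 0) (hG : G ∈ probMeasuresOn (Ioi 0)) (i : ι) :
    0 < fittedValues X G i :=
  mixDensity_pos (hX i) hG

lemma convex_image_fittedValues (hX : ∀ i, X i ≠ 0) (hA : A ⊆ Ioi 0) :
    Convex ℝ (fittedValues X '' probMeasuresOn A) := by
  rw [fittedValues_eq_integral]
  refine convex_image_integral_probMeasuresOn fun i G hG => ?_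
  have := hG.1
  exact integrable_scaleKernel (hX i) (probMeasuresOn_mono hA hG).2

lemma isCompact_image_fittedValues (X : ι → ℝ) {K : Set ℝ} (hK : IsCompact K) (hK0 : K ⊆ Ioi 0) :
    IsCompact (fittedValues X '' probMeasuresOn K) := by
  rw [fittedValues_eq_integral]
  exact isCompact_image_integral_probMeasuresOn hK fun i =>
    (continuousOn_scaleKernel (X i)).mono hK0

end FittedValues

section Gradient

variable {ι : Type*} [Fintype ι]

/-- Lindsay's gradient function: `gradientFun X (fittedValues X G) σ - n` is the directional
derivative of the log-likelihood at `G` towards the Dirac mass at `σ`. -/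
noncomputable def gradientFun (X u : ι → ℝ) (σ : ℝ) : ℝ :=
  ∑ i, scaleKernel (X i) σ / u i

section

variable {X : ι → ℝ} {A : Set ℝ} {G : Measure ℝ}

lemma sum_fittedValues_dirac_div (X u : ι → ℝ) (σ : ℝ) :
    ∑ i, fittedValues X (Measure.dirac σ) i / u i = gradientFun X u σ := by
  simp only [fittedValues_eq_integral, integral_dirac, gradientFun]

lemma integrable_gradientFun (hX : ∀ i, X i ≠ 0) [IsFiniteMeasure G] (hG : ∀ᵐ σ ∂G, 0 < σ)
    (u : ι → ℝ) : Integrable (gradientFun X u) G :=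
  integrable_finsetSum _ fun i _ => (integrable_scaleKernel (hX i) hG).div_const (u i)

lemma integral_gradientFun (hX : ∀ i, X i ≠ 0) [IsFiniteMeasure G] (hG : ∀ᵐ σ ∂G, 0 < σ)
    (u : ι → ℝ) : ∫ σ, gradientFun X u σ ∂G = ∑ i, fittedValues X G i / u i := by
  simp only [gradientFun, fittedValues_eq_integral]
  rw [integral_finsetSum _ fun i _ => (integrable_scaleKernel (hX i) hG).div_const (u i)]
  exact Finset.sum_congr rfl fun i _ => integral_div _ _

lemma sum_fittedValues_div_le (hX : ∀ i, X i ≠ 0) (hA : A ⊆ Ioi 0) (hG : G ∈ probMeasuresOn A)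
    {u : ι → ℝ} {c : ℝ} (hu : ∀ σ ∈ A, gradientFun X u σ ≤ c) :
    ∑ i, fittedValues X G i / u i ≤ c := by
  have := hG.1
  have hG0 := (probMeasuresOn_mono hA hG).2
  rw [← integral_gradientFun hX hG0 u]
  calc ∫ σ, gradientFun X u σ ∂G ≤ ∫ _, c ∂G :=
        integral_mono_ae (integrable_gradientFun hX hG0 u) (integrable_const c)
          ((ae_mem_of_mem_probMeasuresOn hG).mono hu)
    _ = c := by simp

end

section

variable {n : ℕ} {X : Fin n → ℝ} {A : Set ℝ} {G : Measure ℝ}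

theorem isMaxOn_logLik_iff_gradientFun_le (hX : ∀ i, X i ≠ 0) (hA : A ⊆ Ioi 0)
    (hG : G ∈ probMeasuresOn A) :
    IsMaxOn (logLik X 0) (probMeasuresOn A) G ↔
      ∀ σ ∈ A, gradientFun X (fittedValues X G) σ ≤ n := by
  have hpos : ∀ H ∈ probMeasuresOn A, ∀ i, 0 < fittedValues X H i := fun H hH =>
    fittedValues_pos hX (probMeasuresOn_mono hA hH)
  constructor
  · intro hmax σ hσ
    have hmax' : IsMaxOn (fun w => ∑ i, Real.log (w i)) (fittedValues X '' probMeasuresOn A)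
        (fittedValues X G) := forall_mem_image.2 hmax
    simpa [sum_fittedValues_dirac_div] using
      sum_div_le_card_of_isMaxOn_sum_log (convex_image_fittedValues hX hA)
        (mem_image_of_mem _ hG) (hpos G hG) hmax'
        (mem_image_of_mem _ (dirac_mem_probMeasuresOn hσ))
  · intro hle H hH
    refine sum_log_le_of_sum_div_le_card (hpos G hG) (hpos H hH) ?_
    rw [Fintype.card_fin]
    exact sum_fittedValues_div_le hX hA hH hle

lemma exists_isMaxOn_logLik (hX : ∀ i, X i ≠ 0) {K : Set ℝ} (hK : IsCompact K) (hK0 : K ⊆ Ioi 0)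
    (hne : K.Nonempty) : ∃ G ∈ probMeasuresOn K, IsMaxOn (logLik X 0) (probMeasuresOn K) G := by
  obtain ⟨σ, hσ⟩ := hne
  have hcont : ContinuousOn (fun w : Fin n → ℝ => ∑ i, Real.log (w i))
      (fittedValues X '' probMeasuresOn K) := by
    refine continuousOn_finsetSum _ fun i _ => (continuous_apply i).continuousOn.log ?_
    rintro _ ⟨G, hG, rfl⟩
    exact (fittedValues_pos hX (probMeasuresOn_mono hK0 hG) i).ne'
  obtain ⟨_, ⟨G, hG, rfl⟩, hmax⟩ := (isCompact_image_fittedValues X hK hK0).exists_isMaxOn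
    ⟨_, mem_image_of_mem _ (dirac_mem_probMeasuresOn hσ)⟩ hcont
  exact ⟨G, hG, fun H hH => hmax (mem_image_of_mem _ hH)⟩

end

lemma exists_gradientFun_lt [Nonempty ι] {X u : ι → ℝ} {a b : ℝ} (ha : 0 < a)
    (hX : ∀ i, |X i| ∈ Icc a b) (hu : ∀ i, 0 < u i) {σ : ℝ} (hσ : 0 < σ) (hσab : σ ∉ Icc a b) :
    ∃ τ ∈ Icc a b, gradientFun X u σ < gradientFun X u τ := by
  have hab : a ≤ b := (hX (Classical.arbitrary ι)).1.trans (hX (Classical.arbitrary ι)).2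
  have hlt : ∀ τ, (∀ i, scaleKernel (X i) σ < scaleKernel (X i) τ) →
      gradientFun X u σ < gradientFun X u τ := fun τ h =>
    Finset.sum_lt_sum_of_nonempty Finset.univ_nonempty fun i _ =>
      div_lt_div_of_pos_right (h i) (hu i)
  obtain hσa | hσa := lt_or_ge σ a
  · exact ⟨a, left_mem_Icc.2 hab, hlt a fun i => strictMonoOn_scaleKernel (X i)
      ⟨hσ, hσa.le.trans (hX i).1⟩ ⟨ha, (hX i).1⟩ hσa⟩
  · have hσb : b < σ := not_le.1 fun h => hσab ⟨hσa, h⟩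
    exact ⟨b, right_mem_Icc.2 hab, hlt b fun i => strictAntiOn_scaleKernel
      (abs_pos.1 (ha.trans_le (hX i).1)) (hX i).2 ((hX i).2.trans hσb.le) hσb⟩

end Gradient

section ZeroCount

open Polynomial
open scoped Finset

variable {ι : Type*} [Fintype ι] {X u : ι → ℝ}

/-- The coefficient of `exp (-r ^ 2 * t / 2)` in the derivative of `gradientFun X u`, which up to
the factor `(√(2 * π) * σ ^ 2)⁻¹` is an exponential polynomial in `t = σ⁻²`. -/
noncomputable def gradientCoeff (X u : ι → ℝ) (r : ℝ) : ℝ[X] :=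
  ∑ i with |X i| = r, (C (X i ^ 2 / u i) * Polynomial.X - C (1 / u i))

lemma degree_gradientCoeff_lt (X u : ι → ℝ) (r : ℝ) : (gradientCoeff X u r).degree < (2 : ℕ) := by
  refine mem_degreeLT.1 (Submodule.sum_mem _ fun i _ => mem_degreeLT.2 ?_)
  rw [sub_eq_add_neg, ← C_neg]
  exact degree_linear_lt

lemma gradientCoeff_abs_ne_zero (hu : ∀ i, 0 < u i) (i : ι) : gradientCoeff X u |X i| ≠ 0 := by
  have hpos : 0 < ∑ j with |X j| = |X i|, 1 / u j :=
    Finset.sum_pos (fun j _ => one_div_pos.2 (hu j)) ⟨i, by simp⟩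
  intro h
  have heval := congrArg (eval 0) h
  simp only [gradientCoeff, eval_finsetSum, eval_sub, eval_mul, eval_C, eval_X, mul_zero, zero_sub,
    Finset.sum_neg_distrib, eval_zero, neg_eq_zero] at heval
  exact hpos.ne' heval

lemma deriv_gradientFun (X u : ι → ℝ) {σ : ℝ} (hσ : σ ≠ 0) :
    deriv (gradientFun X u) σ = (√(2 * Real.pi) * σ ^ 2)⁻¹ *
      expPoly (Finset.univ.image fun i => |X i|) (fun r => -r ^ 2 / 2) (gradientCoeff X u)
        (σ ^ 2)⁻¹ := by
  have hderiv : HasDerivAt (gradientFun X u)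
      (∑ i, (X i ^ 2 - σ ^ 2) / σ ^ 4 * stdNormalPDF (X i / σ) / u i) σ :=
    HasDerivAt.fun_sum fun i _ => (hasDerivAt_scaleKernel (X i) hσ).div_const (u i)
  have hfiber : expPoly (Finset.univ.image fun i => |X i|) (fun r => -r ^ 2 / 2)
      (gradientCoeff X u) = expPoly Finset.univ ((fun r => -r ^ 2 / 2) ∘ fun i => |X i|)
        fun i => C (X i ^ 2 / u i) * Polynomial.X - C (1 / u i) :=
    expPoly_image _ _ _ _
  rw [hderiv.deriv, hfiber, expPoly, Finset.mul_sum]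
  refine Finset.sum_congr rfl fun i _ => ?_
  have hexp : -(X i / σ) ^ 2 / 2 = -X i ^ 2 / 2 * (σ ^ 2)⁻¹ := by ring
  simp only [stdNormalPDF, hexp, eval_sub, eval_mul, eval_C, eval_X, Function.comp_apply, sq_abs]
  field_simp

lemma card_lt_of_deriv_gradientFun_eq_zero [Nonempty ι] (hu : ∀ i, 0 < u i) {W : Finset ℝ}
    (hW : ∀ w ∈ W, 0 < w ∧ deriv (gradientFun X u) w = 0) :
    #W < 2 * #(Finset.univ.image fun i => |X i|) := by
  by_contra! hcard
  have hinj : InjOn (fun w : ℝ => (w ^ 2)⁻¹) W := fun v hv w hw hvw =>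
    (pow_left_inj₀ (hW v hv).1.le (hW w hw).1.le two_ne_zero).1 (inv_injective hvw)
  have hfreq : InjOn (fun r : ℝ => -r ^ 2 / 2) (Finset.univ.image fun i => |X i|) := by
    simp only [Finset.coe_image, Finset.coe_univ, image_univ]
    rintro _ ⟨i, rfl⟩ _ ⟨j, rfl⟩ hij
    exact (pow_left_inj₀ (abs_nonneg _) (abs_nonneg _) two_ne_zero).1 (by linarith)
  have hzero := coeff_eq_zero_of_expPoly_eq_zero hfreq (P := gradientCoeff X u) (d := fun _ => 2)
    (Z := W.image fun w => (w ^ 2)⁻¹) (fun r _ => degree_gradientCoeff_lt X u r)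
    (by simpa [Finset.card_image_of_injOn hinj, mul_comm] using hcard) <| by
      refine Finset.forall_mem_image.2 fun w hw => ?_
      obtain ⟨hw0, hw'⟩ := hW w hw
      rw [deriv_gradientFun X u hw0.ne'] at hw'
      exact (mul_eq_zero.1 hw').resolve_left (by positivity)
  let i := Classical.arbitrary ι
  exact gradientCoeff_abs_ne_zero hu i (hzero _ (Finset.mem_image_of_mem _ (Finset.mem_univ i)))

lemma card_le_of_gradientFun_eq_max [Nonempty ι] (hu : ∀ i, 0 < u i) {c : ℝ}
    (hc : ∀ σ > 0, gradientFun X u σ ≤ c) {Z : Finset ℝ}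
    (hZ : ∀ z ∈ Z, 0 < z ∧ gradientFun X u z = c) :
    #Z ≤ #(Finset.univ.image fun i => |X i|) := by
  have hdiff : ∀ σ ∈ Ioi (0 : ℝ), HasDerivAt (gradientFun X u) (deriv (gradientFun X u) σ) σ :=
    fun σ hσ => (DifferentiableAt.fun_sum fun i _ => ((hasDerivAt_scaleKernel (X i)
      (ne_of_gt hσ)).div_const (u i)).differentiableAt).hasDerivAt
  obtain ⟨W, hW, hZW⟩ := exists_deriv_zeros_of_eq_max isOpen_Ioi hdiff hc
    (fun z hz => (hZ z hz).1) fun z hz => (hZ z hz).2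
  have := card_lt_of_deriv_gradientFun_eq_zero hu hW
  omega

lemma exists_finset_mem_iff_gradientFun_eq_max [Nonempty ι] (hu : ∀ i, 0 < u i) {c : ℝ}
    (hc : ∀ σ > 0, gradientFun X u σ ≤ c) :
    ∃ S : Finset ℝ, (∀ σ, σ ∈ S ↔ 0 < σ ∧ gradientFun X u σ = c) ∧
      #S ≤ #(Finset.univ.image fun i => |X i|) := by
  have hfin : {σ | 0 < σ ∧ gradientFun X u σ = c}.Finite := by
    by_contra hinf
    obtain ⟨Z, hZ, hcard⟩ := Set.Infinite.exists_subset_card_eq hinf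
      (#(Finset.univ.image fun i => |X i|) + 1)
    have := card_le_of_gradientFun_eq_max hu hc (fun z hz => hZ hz)
    omega
  refine ⟨hfin.toFinset, fun σ => hfin.mem_toFinset, ?_⟩
  exact card_le_of_gradientFun_eq_max hu hc fun z hz => hfin.mem_toFinset.1 hz

lemma sum_mul_scaleKernel (S : Finset ℝ) (w : ℝ → ℝ) (x : ℝ) :
    ∑ σ ∈ S, w σ * scaleKernel x σ = (√(2 * Real.pi))⁻¹ *
      expPoly S (fun σ => -(σ ^ 2)⁻¹ / 2) (fun σ => C (w σ / σ)) (x ^ 2) := by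
  rw [expPoly, Finset.mul_sum]
  refine Finset.sum_congr rfl fun σ _ => ?_
  have hexp : -(x / σ) ^ 2 / 2 = -(σ ^ 2)⁻¹ / 2 * x ^ 2 := by ring
  rw [scaleKernel, stdNormalPDF, hexp, eval_C]
  ring

lemma eq_zero_of_sum_mul_scaleKernel_eq_zero {S : Finset ℝ} (hS : ∀ σ ∈ S, 0 < σ)
    (hcard : #S ≤ #(Finset.univ.image fun i => |X i|)) {w : ℝ → ℝ}
    (hw : ∀ i, ∑ σ ∈ S, w σ * scaleKernel (X i) σ = 0) : ∀ σ ∈ S, w σ = 0 := by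
  have hfreq : InjOn (fun σ : ℝ => -(σ ^ 2)⁻¹ / 2) S := fun σ hσ τ hτ h =>
    (pow_left_inj₀ (hS σ hσ).le (hS τ hτ).le two_ne_zero).1 (inv_injective (by linarith))
  have hsq : InjOn (fun r : ℝ => r ^ 2) (Finset.univ.image fun i => |X i|) :=
    (pow_left_strictMonoOn₀ two_ne_zero).injOn.mono fun r hr => by
      obtain ⟨i, -, rfl⟩ := Finset.mem_image.1 hr
      exact abs_nonneg (X i)
  have hzeros : ∀ z ∈ (Finset.univ.image fun i => |X i|).image fun r => r ^ 2,
      expPoly S (fun σ => -(σ ^ 2)⁻¹ / 2) (fun σ => C (w σ / σ)) z = 0 := by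
    refine Finset.forall_mem_image.2 <| Finset.forall_mem_image.2 fun i _ => ?_
    have hi := hw i
    rw [sum_mul_scaleKernel, ← sq_abs] at hi
    exact (mul_eq_zero.1 hi).resolve_left (by positivity)
  intro σ hσ
  have hzero := coeff_eq_zero_of_expPoly_eq_zero hfreq (d := fun _ => 1)
    (fun σ _ => degree_C_le.trans_lt (by norm_num))
    (by simpa [Finset.card_image_of_injOn hsq] using hcard) hzeros σ hσ
  exact (div_eq_zero_iff.1 (C_eq_zero.1 hzero)).resolve_right (hS σ hσ).ne'

lemma eq_of_fittedValues_eq {G H : Measure ℝ} [IsFiniteMeasure G] [IsFiniteMeasure H]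
    {S : Finset ℝ} (hS : ∀ σ ∈ S, 0 < σ) (hcard : #S ≤ #(Finset.univ.image fun i => |X i|))
    (hG : ∀ᵐ σ ∂G, σ ∈ S) (hH : ∀ᵐ σ ∂H, σ ∈ S) (h : fittedValues X G = fittedValues X H) :
    G = H := by
  have hsum : ∀ (F : Measure ℝ) [IsFiniteMeasure F], (∀ᵐ σ ∂F, σ ∈ S) → ∀ i,
      fittedValues X F i = ∑ σ ∈ S, F.real {σ} * scaleKernel (X i) σ := fun F _ hF i => by
    rw [fittedValues_eq_integral]
    calc ∫ σ, scaleKernel (X i) σ ∂F = ∫ σ in S, scaleKernel (X i) σ ∂F := by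
          rw [Measure.restrict_eq_self_of_ae_mem hF]
      _ = ∑ σ ∈ S, F.real {σ} * scaleKernel (X i) σ := setIntegral_finset S .finset
  have hreal := eq_zero_of_sum_mul_scaleKernel_eq_zero (X := X) hS hcard
    (w := fun σ => G.real {σ} - H.real {σ}) fun i => by
      simp only [sub_mul, Finset.sum_sub_distrib]
      rw [← hsum G hG, ← hsum H hH, h, sub_self]
  refine measure_eq_of_forall_singleton_eq hG hH fun σ hσ => ?_
  exact (measureReal_eq_measureReal_iff (measure_ne_top G _) (measure_ne_top H _)).1
    (sub_eq_zero.1 (hreal σ hσ))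

end ZeroCount

section NPMLE

open scoped Finset

variable {n : ℕ} {X : Fin n → ℝ} {G H : Measure ℝ} {a b : ℝ}

lemma isNPMLE_iff_gradientFun_le (hX : ∀ i, X i ≠ 0) :
    IsNPMLE X G ↔ G ∈ probMeasuresOn (Ioi 0) ∧
      ∀ σ > 0, gradientFun X (fittedValues X G) σ ≤ n := by
  have hmax : IsNPMLE X G ↔
      G ∈ probMeasuresOn (Ioi 0) ∧ IsMaxOn (logLik X 0) (probMeasuresOn (Ioi 0)) G :=
    ⟨fun h => ⟨⟨h.1, h.2.1⟩, fun H hH => h.2.2 H hH.1 hH.2⟩,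
      fun h => ⟨h.1.1, h.1.2, fun H hH₁ hH₂ => h.2 ⟨hH₁, hH₂⟩⟩⟩
  rw [hmax]
  exact and_congr_right fun hG => isMaxOn_logLik_iff_gradientFun_le hX Subset.rfl hG

theorem exists_isNPMLE [NeZero n] (ha : 0 < a) (hX : ∀ i, |X i| ∈ Icc a b) :
    ∃ G, IsNPMLE X G := by
  have hX0 : ∀ i, X i ≠ 0 := fun i => abs_pos.1 (ha.trans_le (hX i).1)
  have hIcc : Icc a b ⊆ Ioi 0 := fun σ hσ => ha.trans_le hσ.1
  obtain ⟨G, hG, hmax⟩ := exists_isMaxOn_logLik hX0 isCompact_Icc hIcc ⟨_, hX 0⟩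
  have hG0 := probMeasuresOn_mono hIcc hG
  have hle := (isMaxOn_logLik_iff_gradientFun_le hX0 hIcc hG).1 hmax
  refine ⟨G, (isNPMLE_iff_gradientFun_le hX0).2 ⟨hG0, fun σ hσ => ?_⟩⟩
  by_cases hσab : σ ∈ Icc a b
  · exact hle σ hσab
  · obtain ⟨τ, hτ, hlt⟩ := exists_gradientFun_lt ha hX (fittedValues_pos hX0 hG0) hσ hσab
    exact hlt.le.trans (hle τ hτ)

namespace IsNPMLE

lemma fittedValues_eq (hX : ∀ i, X i ≠ 0) (hG : IsNPMLE X G) (hH : IsNPMLE X H) :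
    fittedValues X G = fittedValues X H := by
  obtain ⟨hGP, hGle⟩ := (isNPMLE_iff_gradientFun_le hX).1 hG
  obtain ⟨hHP, hHle⟩ := (isNPMLE_iff_gradientFun_le hX).1 hH
  apply eq_of_sum_div_le_card (fittedValues_pos hX hGP) (fittedValues_pos hX hHP) <;>
    rw [Fintype.card_fin]
  · exact sum_fittedValues_div_le hX Subset.rfl hHP hGle
  · exact sum_fittedValues_div_le hX Subset.rfl hGP hHle

lemma ae_gradientFun_eq (hX : ∀ i, X i ≠ 0) (hG : IsNPMLE X G) :
    ∀ᵐ σ ∂G, 0 < σ ∧ gradientFun X (fittedValues X G) σ = n := by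
  obtain ⟨hGP, hle⟩ := (isNPMLE_iff_gradientFun_le hX).1 hG
  have := hG.1
  have hpos : ∀ᵐ σ ∂G, 0 < σ := hG.2.1
  have hint := integrable_gradientFun hX hpos (fittedValues X G)
  have hmean : ∫ σ, gradientFun X (fittedValues X G) σ ∂G = n := by
    rw [integral_gradientFun hX hpos]
    simp [div_self (fittedValues_pos hX hGP _).ne']
  have hnonneg : 0 ≤ᵐ[G] fun σ => n - gradientFun X (fittedValues X G) σ :=
    hpos.mono fun σ hσ => sub_nonneg.2 (hle σ hσ)
  have hzero := (integral_eq_zero_iff_of_nonneg_ae hnonneg ((integrable_const _).sub hint)).1 <| by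
    rw [integral_sub (integrable_const _) hint, hmean]
    simp
  filter_upwards [hpos, hzero] with σ hσ hσ0
  exact ⟨hσ, (sub_eq_zero.1 hσ0).symm⟩

theorem exists_finset_mem_iff_gradientFun_eq [NeZero n] (hX : ∀ i, X i ≠ 0) (hG : IsNPMLE X G) :
    ∃ S : Finset ℝ, (∀ σ, σ ∈ S ↔ 0 < σ ∧ gradientFun X (fittedValues X G) σ = n) ∧
      #S ≤ #(Finset.univ.image fun i => |X i|) := by
  obtain ⟨hGP, hle⟩ := (isNPMLE_iff_gradientFun_le hX).1 hG
  exact exists_finset_mem_iff_gradientFun_eq_max (fittedValues_pos hX hGP) hle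

lemma mem_Icc_of_gradientFun_eq [NeZero n] (hG : IsNPMLE X G) (ha : 0 < a)
    (hX : ∀ i, |X i| ∈ Icc a b) {σ : ℝ} (hσ : 0 < σ)
    (hσn : gradientFun X (fittedValues X G) σ = n) : σ ∈ Icc a b := by
  have hX0 : ∀ i, X i ≠ 0 := fun i => abs_pos.1 (ha.trans_le (hX i).1)
  obtain ⟨hGP, hle⟩ := (isNPMLE_iff_gradientFun_le hX0).1 hG
  by_contra hσab
  obtain ⟨τ, hτ, hlt⟩ := exists_gradientFun_lt ha hX (fittedValues_pos hX0 hGP) hσ hσab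
  exact (hlt.trans_le (hle τ (ha.trans_le hτ.1))).ne hσn

theorem unique [NeZero n] (hX : ∀ i, X i ≠ 0) (hG : IsNPMLE X G) (hH : IsNPMLE X H) : G = H := by
  have hGH := hG.fittedValues_eq hX hH
  have := hG.1
  have := hH.1
  obtain ⟨S, hS, hcard⟩ := hG.exists_finset_mem_iff_gradientFun_eq hX
  refine eq_of_fittedValues_eq (fun σ hσ => ((hS σ).1 hσ).1) hcard ?_ ?_ hGH
  · exact (hG.ae_gradientFun_eq hX).mono fun σ hσ => (hS σ).2 hσ
  · exact (hH.ae_gradientFun_eq hX).mono fun σ hσ => (hS σ).2 (hGH ▸ hσ)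

end IsNPMLE

end NPMLE

/-- Lemma 11 / `lemma: structural`. If all data points are nonzero,
the NPMLE exists, is unique, is a discrete measure with at most `|{|X₁|,…,|Xₙ|}|` atoms,
and is supported in `[minᵢ |Xᵢ|, maxᵢ |Xᵢ|]`. -/
theorem stmt14 (n : ℕ) (hn : 0 < n) (X : Fin n → ℝ) (hX : ∀ i, X i ≠ 0) :
    (∃! G : Measure ℝ, IsNPMLE X G) ∧
      ∀ G : Measure ℝ, IsNPMLE X G →
        ∃ S : Finset ℝ,
          G (↑S)ᶜ = 0 ∧
          S.card ≤ (Finset.univ.image fun i => |X i|).card ∧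
          ↑S ⊆ Set.Icc (sInf (Set.range fun i => |X i|)) (sSup (Set.range fun i => |X i|)) := by
  have : NeZero n := ⟨hn.ne'⟩
  have hfin : (range fun i => |X i|).Finite := Set.finite_range _
  have hpos : 0 < sInf (range fun i => |X i|) := by
    obtain ⟨i, hi⟩ := (range_nonempty fun i => |X i|).csInf_mem hfin
    exact hi ▸ abs_pos.2 (hX i)
  have hIcc : ∀ i, |X i| ∈ Icc (sInf (range fun i => |X i|)) (sSup (range fun i => |X i|)) :=
    fun i => ⟨csInf_le hfin.bddBelow ⟨i, rfl⟩, le_csSup hfin.bddAbove ⟨i, rfl⟩⟩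
  refine ⟨?_, fun G hG => ?_⟩
  · obtain ⟨G, hG⟩ := exists_isNPMLE hpos hIcc
    exact ⟨G, hG, fun H hH => hH.unique hX hG⟩
  · obtain ⟨S, hS, hcard⟩ := hG.exists_finset_mem_iff_gradientFun_eq hX
    refine ⟨S, (hG.ae_gradientFun_eq hX).mono fun σ hσ => (hS σ).2 hσ, hcard, fun σ hσ => ?_⟩
    obtain ⟨hσ0, hσn⟩ := (hS σ).1 hσ
    exact hG.mem_Icc_of_gradientFun_eq hpos hIcc hσ0 hσn
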